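/- Assume (H1)–(H4) and γ = αβ. Suppose ∫_{t₀}^∞ r₁(v)^{-1/α} ( ∫_{t₀}^v r₂(u)^{-1/β} ( ∫_{t₀}^u q(s) ds )^{1/β} du )^{1/α} dv = ∞. If limsup_{t→∞} π₁(σ(t))^{γ/β} · ∫_{t₀}^t r₂(u)^{-1/β} ( ∫_{t₀}^u q(s) ds )^{1/β} du > 1, then equation (E) has property A, i.e. every solution of (E) is either oscillatory or tends to 0 as t → ∞. -/

import Mathlib

open Filter MeasureTheory Set

/-- Signed power: for exponents that are quotients of odd positive integers,
`x ^ p` preserves the sign of `x`. -/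
noncomputable def opow (x p : ℝ) : ℝ := Real.sign x * |x| ^ p

/-- `L₁y = r₁ · (y')^α`. -/
noncomputable def L1 (r₁ : ℝ → ℝ) (α : ℝ) (y : ℝ → ℝ) : ℝ → ℝ :=
  fun t => r₁ t * opow (deriv y t) α

/-- `L₂y = r₂ · ((L₁y)')^β`. -/
noncomputable def L2 (r₁ r₂ : ℝ → ℝ) (α β : ℝ) (y : ℝ → ℝ) : ℝ → ℝ :=
  fun t => r₂ t * opow (deriv (L1 r₁ α y) t) β

/-- `L₃y = (L₂y)'`. -/
noncomputable def L3 (r₁ r₂ : ℝ → ℝ) (α β : ℝ) (y : ℝ → ℝ) : ℝ → ℝ :=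
  deriv (L2 r₁ r₂ α β y)

/-- A real number which is a quotient of odd positive integers. -/
def OddQuotient (x : ℝ) : Prop :=
  ∃ m n : ℕ, Odd m ∧ Odd n ∧ 0 < m ∧ 0 < n ∧ x = (m : ℝ) / (n : ℝ)

/-- The standing hypotheses (H1)–(H4). -/
structure Hyp (t₀ α β γ : ℝ) (r₁ r₂ q σ : ℝ → ℝ) : Prop where
  ht₀ : 0 < t₀
  hα : OddQuotient α
  hβ : OddQuotient β
  hγ : OddQuotient γ
  hr₁c : ContinuousOn r₁ (Set.Ici t₀)
  hr₂c : ContinuousOn r₂ (Set.Ici t₀)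
  hr₁p : ∀ t, t₀ ≤ t → 0 < r₁ t
  hr₂p : ∀ t, t₀ ≤ t → 0 < r₂ t
  /-- noncanonical: `π₁(t₀) = ∫_{t₀}^∞ r₁^{-1/α} < ∞` -/
  hπ₁fin : IntegrableOn (fun s => r₁ s ^ (-(1/α))) (Set.Ici t₀)
  /-- noncanonical: `π₂(t₀) = ∫_{t₀}^∞ r₂^{-1/β} < ∞` -/
  hπ₂fin : IntegrableOn (fun s => r₂ s ^ (-(1/β))) (Set.Ici t₀)
  hqc : ContinuousOn q (Set.Ici t₀)
  hq0 : ∀ t, t₀ ≤ t → 0 ≤ q t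
  /-- `q` does not vanish eventually -/
  hqnv : ∀ T, t₀ ≤ T → ∃ t, T ≤ t ∧ q t ≠ 0
  hσd : DifferentiableOn ℝ σ (Set.Ici t₀)
  hσd' : ContinuousOn (deriv σ) (Set.Ici t₀)
  hσpos : ∀ t, t₀ ≤ t → 0 < σ t
  hσadv : ∀ t, t₀ ≤ t → t ≤ σ t
  hσmono : ∀ t, t₀ ≤ t → 0 ≤ deriv σ t

/-- `y` is a (nontrivial) solution of equation (E) on some half-line `[T,∞) ⊆ [t₀,∞)`. -/
def IsSolution (t₀ α β γ : ℝ) (r₁ r₂ q σ y : ℝ → ℝ) : Prop :=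
  ∃ T, t₀ ≤ T ∧
    ContinuousOn y (Set.Ici T) ∧
    DifferentiableOn ℝ y (Set.Ici T) ∧
    ContinuousOn (L1 r₁ α y) (Set.Ici T) ∧
    DifferentiableOn ℝ (L1 r₁ α y) (Set.Ici T) ∧
    ContinuousOn (L2 r₁ r₂ α β y) (Set.Ici T) ∧
    DifferentiableOn ℝ (L2 r₁ r₂ α β y) (Set.Ici T) ∧
    (∀ t, T ≤ t → L3 r₁ r₂ α β y t + q t * opow (y (σ t)) γ = 0) ∧
    (∀ T', T ≤ T' → ∃ t, T' ≤ t ∧ y t ≠ 0)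

/-- A function is oscillatory if it has arbitrarily large zeros. -/
def Oscillatory (y : ℝ → ℝ) : Prop := ∀ T : ℝ, ∃ t, T ≤ t ∧ y t = 0

/-- Equation (E) has property A: every solution is oscillatory or tends to `0`. -/
def PropertyA (t₀ α β γ : ℝ) (r₁ r₂ q σ : ℝ → ℝ) : Prop :=
  ∀ y : ℝ → ℝ, IsSolution t₀ α β γ r₁ r₂ q σ y →
    Oscillatory y ∨ Filter.Tendsto y Filter.atTop (nhds 0)

/-- Equation (E) is oscillatory: every solution is oscillatory. -/
def OscillatoryEq (t₀ α β γ : ℝ) (r₁ r₂ q σ : ℝ → ℝ) : Prop :=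
  ∀ y : ℝ → ℝ, IsSolution t₀ α β γ r₁ r₂ q σ y → Oscillatory y

/-- `π₁(t) = ∫_t^∞ r₁(s)^{-1/α} ds`. -/
noncomputable def pi1 (r₁ : ℝ → ℝ) (α : ℝ) (t : ℝ) : ℝ :=
  ∫ s in Set.Ioi t, r₁ s ^ (-(1/α))

/-- `π₂(t) = ∫_t^∞ r₂(s)^{-1/β} ds`. -/
noncomputable def pi2 (r₂ : ℝ → ℝ) (β : ℝ) (t : ℝ) : ℝ :=
  ∫ s in Set.Ioi t, r₂ s ^ (-(1/β))

/-- `π(t) = ∫_t^∞ r₁(s)^{-1/α} · π₂(s)^{1/α} ds`. -/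
noncomputable def piInf (r₁ r₂ : ℝ → ℝ) (α β : ℝ) (t : ℝ) : ℝ :=
  ∫ s in Set.Ioi t, r₁ s ^ (-(1/α)) * (pi2 r₂ β s) ^ (1/α)

/-- The class `S₁`: `y > 0, L₁y < 0, L₂y < 0, L₃y < 0` on `[t₁,∞)`. -/
def InS1 (r₁ r₂ : ℝ → ℝ) (α β : ℝ) (y : ℝ → ℝ) (t₁ : ℝ) : Prop :=
  ∀ t, t₁ ≤ t → 0 < y t ∧ L1 r₁ α y t < 0 ∧ L2 r₁ r₂ α β y t < 0 ∧ L3 r₁ r₂ α β y t < 0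

/-- The class `S₂`: `y > 0, L₁y < 0, L₂y > 0, L₃y < 0` on `[t₁,∞)`. -/
def InS2 (r₁ r₂ : ℝ → ℝ) (α β : ℝ) (y : ℝ → ℝ) (t₁ : ℝ) : Prop :=
  ∀ t, t₁ ≤ t → 0 < y t ∧ L1 r₁ α y t < 0 ∧ 0 < L2 r₁ r₂ α β y t ∧ L3 r₁ r₂ α β y t < 0

/-- The class `S₃`: `y > 0, L₁y > 0, L₂y > 0, L₃y < 0` on `[t₁,∞)`. -/
def InS3 (r₁ r₂ : ℝ → ℝ) (α β : ℝ) (y : ℝ → ℝ) (t₁ : ℝ) : Prop :=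
  ∀ t, t₁ ≤ t → 0 < y t ∧ 0 < L1 r₁ α y t ∧ 0 < L2 r₁ r₂ α β y t ∧ L3 r₁ r₂ α β y t < 0

/-- The class `S₄`: `y > 0, L₁y > 0, L₂y < 0, L₃y < 0` on `[t₁,∞)`. -/
def InS4 (r₁ r₂ : ℝ → ℝ) (α β : ℝ) (y : ℝ → ℝ) (t₁ : ℝ) : Prop :=
  ∀ t, t₁ ≤ t → 0 < y t ∧ 0 < L1 r₁ α y t ∧ L2 r₁ r₂ α β y t < 0 ∧ L3 r₁ r₂ α β y t < 0

/-!
A positive solution cannot stay above a constant `c > 0`: the equation then gives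
`(L₂y)' ≤ -c ^ γ q`, and inverting the operators `f ↦ r (f')^p` one at a time turns this into
`y ≤ -k ∫ r₁^{-1/α} (∫ r₂^{-1/β} (∫ q)^{1/β})^{1/α}` for some `k > 0`, whose right-hand side tends
to `-∞`. As `r₁^{-1/α}` and `r₂^{-1/β}` are integrable, the divergence of this iterated integral
forces its two inner integrals to diverge as well, which is what absorbs the constants of
integration along the way. On the other hand `(L₂y)' ≤ 0`, so that `L₂y`, `L₁y` and finally `y'`
have eventually constant sign; hence `y` is eventually monotone, and it tends to `0`.
-/

lemma OddQuotient.pos {x : ℝ} (h : OddQuotient x) : 0 < x := by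
  obtain ⟨m, n, -, -, hm, hn, rfl⟩ := h
  positivity

/-! ### Signed powers -/

lemma opow_of_pos {x : ℝ} (hx : 0 < x) (p : ℝ) : opow x p = x ^ p := by
  simp [opow, Real.sign_of_pos hx, abs_of_pos hx]

lemma opow_neg (x p : ℝ) : opow (-x) p = -opow x p := by
  simp [opow, Real.sign_neg]

lemma opow_pos {x : ℝ} (hx : 0 < x) (p : ℝ) : 0 < opow x p := by
  rw [opow_of_pos hx]
  exact Real.rpow_pos_of_pos hx p

lemma nonpos_of_opow_nonpos {x p : ℝ} (h : opow x p ≤ 0) : x ≤ 0 :=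
  not_lt.1 fun hx => h.not_gt (opow_pos hx p)

lemma nonneg_of_opow_nonneg {x p : ℝ} (h : 0 ≤ opow x p) : 0 ≤ x :=
  neg_nonpos.1 <| nonpos_of_opow_nonpos (p := p) <| by rwa [opow_neg, neg_nonpos]

lemma le_neg_rpow_of_opow_le_neg {x p K : ℝ} (hp : 0 < p) (hK : 0 ≤ K) (h : opow x p ≤ -K) :
    x ≤ -K ^ (1 / p) := by
  rcases (nonpos_of_opow_nonpos (h.trans (neg_nonpos.2 hK))).lt_or_eq with hx | rfl
  · have hx' : 0 < -x := neg_pos.2 hx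
    have hKx : K ≤ (-x) ^ p := by
      rw [← opow_of_pos hx', opow_neg]
      exact le_neg_of_le_neg h
    rw [one_div]
    exact le_neg_of_le_neg ((Real.rpow_inv_le_iff_of_pos hK hx'.le hp).2 hKx)
  · have hK0 : K = 0 := le_antisymm (by simpa [opow] using h) hK
    simp [hK0, Real.zero_rpow (inv_ne_zero hp.ne')]

lemma le_of_mul_opow_le_neg {r x p K : ℝ} (hp : 0 < p) (hr : 0 < r) (hK : 0 ≤ K)
    (h : r * opow x p ≤ -K) : x ≤ -(r ^ (-(1 / p)) * K ^ (1 / p)) := by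
  have hdiv : opow x p ≤ -(K / r) := by
    rw [← neg_div, le_div_iff₀' hr]
    exact h
  refine (le_neg_rpow_of_opow_le_neg hp (by positivity) hdiv).trans_eq ?_
  rw [Real.div_rpow hK hr.le, Real.rpow_neg hr.le, div_eq_inv_mul]

/-! ### Eventual sign and monotonicity -/

/-- The function `f` is eventually nonnegative or eventually nonpositive. -/
def EventuallyConstSign (f : ℝ → ℝ) : Prop :=
  (∀ᶠ t in atTop, 0 ≤ f t) ∨ ∀ᶠ t in atTop, f t ≤ 0

lemma exists_monotoneOn_or_antitoneOn_of_deriv {f : ℝ → ℝ}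
    (hf : ∀ᶠ t in atTop, DifferentiableAt ℝ f t) (h : EventuallyConstSign (deriv f)) :
    ∃ T, MonotoneOn f (Ici T) ∨ AntitoneOn f (Ici T) := by
  rcases h with h | h
  all_goals
    obtain ⟨T, hT⟩ := eventually_atTop.1 (hf.and h)
    have hcont : ContinuousOn f (Ici T) := fun t ht => (hT t ht).1.continuousAt.continuousWithinAt
    have hdiff : DifferentiableOn ℝ f (interior (Ici T)) := fun t ht =>
      (hT t (interior_subset ht)).1.differentiableWithinAt
  · exact ⟨T, .inl <| monotoneOn_of_deriv_nonneg (convex_Ici T) hcont hdiff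
      fun t ht => (hT t (interior_subset ht)).2⟩
  · exact ⟨T, .inr <| antitoneOn_of_deriv_nonpos (convex_Ici T) hcont hdiff
      fun t ht => (hT t (interior_subset ht)).2⟩

lemma eventuallyConstSign_of_monotoneOn_or_antitoneOn {f : ℝ → ℝ} {T : ℝ}
    (h : MonotoneOn f (Ici T) ∨ AntitoneOn f (Ici T)) : EventuallyConstSign f := by
  by_contra hsign
  obtain ⟨hneg, hpos⟩ := not_or.1 hsign
  obtain ⟨s, hs, hTs⟩ := ((not_eventually.1 hneg).and_eventually (eventually_ge_atTop T)).exists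
  obtain ⟨t, ht, hTt⟩ := ((not_eventually.1 hpos).and_eventually (eventually_ge_atTop T)).exists
  rcases h with h | h
  · exact hneg <| (eventually_ge_atTop t).mono fun u hu =>
      (not_le.1 ht).le.trans (h hTt (hTt.trans hu) hu)
  · exact hpos <| (eventually_ge_atTop s).mono fun u hu =>
      (h hTs (hTs.trans hu) hu).trans (not_le.1 hs).le

lemma EventuallyConstSign.of_deriv {f : ℝ → ℝ} (h : EventuallyConstSign (deriv f))
    (hf : ∀ᶠ t in atTop, DifferentiableAt ℝ f t) : EventuallyConstSign f :=
  let ⟨_, hT⟩ := exists_monotoneOn_or_antitoneOn_of_deriv hf h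
  eventuallyConstSign_of_monotoneOn_or_antitoneOn hT

lemma EventuallyConstSign.deriv_of_L1 {f r : ℝ → ℝ} {p : ℝ} (h : EventuallyConstSign (L1 r p f))
    (hr : ∀ᶠ t in atTop, 0 < r t) : EventuallyConstSign (deriv f) := by
  refine h.imp (fun h => ?_) fun h => ?_
  all_goals filter_upwards [h, hr] with t ht hrt
  · exact nonneg_of_opow_nonneg (nonneg_of_mul_nonneg_right ht hrt)
  · exact nonpos_of_opow_nonpos (nonpos_of_mul_nonpos_right ht hrt)

lemma tendsto_zero_of_monotoneOn_or_antitoneOn {y : ℝ → ℝ} {T : ℝ}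
    (h : MonotoneOn y (Ici T) ∨ AntitoneOn y (Ici T)) (hpos : ∀ᶠ t in atTop, 0 < y t)
    (hlow : ∀ c, 0 < c → ¬∀ᶠ t in atTop, c ≤ y t) : Tendsto y atTop (nhds 0) := by
  rcases h with h | h
  · obtain ⟨s, hs, hTs⟩ := (hpos.and (eventually_ge_atTop T)).exists
    exact absurd ((eventually_ge_atTop s).mono fun t ht => h hTs (hTs.trans ht) ht) (hlow _ hs)
  · refine tendsto_order.2 ⟨fun ε hε => hpos.mono fun t ht => hε.trans ht, fun ε hε => ?_⟩
    obtain ⟨s, hs, hTs⟩ :=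
      ((not_eventually.1 (hlow ε hε)).and_eventually (eventually_ge_atTop T)).exists
    filter_upwards [eventually_ge_atTop s] with t ht
    exact (h hTs (hTs.trans ht) ht).trans_lt (not_le.1 hs)

lemma eventually_pos_or_neg_of_not_oscillatory {y : ℝ → ℝ} {T : ℝ} (hy : ContinuousOn y (Ici T))
    (h : ¬Oscillatory y) : (∀ᶠ t in atTop, 0 < y t) ∨ ∀ᶠ t in atTop, y t < 0 := by
  obtain ⟨S, hS⟩ : ∃ S, ∀ t, S ≤ t → y t ≠ 0 := by simpa [Oscillatory] using h
  set R := max T S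
  have hcont : ContinuousOn y (Ici R) := hy.mono (Ici_subset_Ici.2 (le_max_left T S))
  have hne : ∀ t ∈ Ici R, y t ≠ 0 := fun t ht => hS t ((le_max_right T S).trans ht)
  by_contra! hsign
  obtain ⟨s, hs, hRs⟩ := (hsign.1.and_eventually (eventually_ge_atTop R)).exists
  obtain ⟨t, ht, hRt⟩ := (hsign.2.and_eventually (eventually_ge_atTop R)).exists
  obtain ⟨u, hu, hu0⟩ := isPreconnected_Ici.intermediate_value hRs hRt hcont ⟨hs, ht⟩
  exact hne u hu hu0

/-! ### Primitives on a half-line -/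

section Primitive

variable {g : ℝ → ℝ} {a : ℝ}

lemma intervalIntegrable_of_locallyIntegrableOn_Ici {b c : ℝ} (hg : LocallyIntegrableOn g (Ici a))
    (hab : a ≤ b) (hac : a ≤ c) : IntervalIntegrable g volume b c :=
  (hg.integrableOn_compact_subset (fun _ hx => (le_min hab hac).trans hx.1)
    isCompact_uIcc).intervalIntegrable

lemma continuousOn_primitive_Ici (hg : LocallyIntegrableOn g (Ici a)) :
    ContinuousOn (fun t => ∫ s in a..t, g s) (Ici a) := by
  intro t (ht : a ≤ t)
  have hat : a ≤ t + 1 := ht.trans (lt_add_one t).le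
  have hcont := intervalIntegral.continuousOn_primitive_interval'
    (intervalIntegrable_of_locallyIntegrableOn_Ici hg le_rfl hat) left_mem_uIcc
  rw [uIcc_of_le hat, ← Ici_inter_Iic] at hcont
  exact (hcont t ⟨ht, (lt_add_one t).le⟩).mono_of_mem_nhdsWithin <|
    inter_mem self_mem_nhdsWithin (mem_nhdsWithin_of_mem_nhds (Iic_mem_nhds (lt_add_one t)))

lemma primitive_nonneg (hg₀ : ∀ t, a ≤ t → 0 ≤ g t) {t : ℝ} (ht : a ≤ t) :
    0 ≤ ∫ s in a..t, g s :=
  intervalIntegral.integral_nonneg ht fun s hs => hg₀ s hs.1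

lemma monotoneOn_primitive_Ici (hg : LocallyIntegrableOn g (Ici a))
    (hg₀ : ∀ t, a ≤ t → 0 ≤ g t) : MonotoneOn (fun t => ∫ s in a..t, g s) (Ici a) := by
  intro s (hs : a ≤ s) t (ht : a ≤ t) hst
  refine sub_nonneg.1 ?_
  rw [intervalIntegral.integral_interval_sub_left
    (intervalIntegrable_of_locallyIntegrableOn_Ici hg le_rfl ht)
    (intervalIntegrable_of_locallyIntegrableOn_Ici hg le_rfl hs)]
  exact intervalIntegral.integral_nonneg hst fun u hu => hg₀ u (hs.trans hu.1)

lemma eventually_le_neg_mul_primitive {f : ℝ → ℝ} {k : ℝ} (hk : 0 < k)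
    (hf : ∀ᶠ t in atTop, DifferentiableAt ℝ f t) (hg : LocallyIntegrableOn g (Ici a))
    (hfg : ∀ᶠ t in atTop, deriv f t ≤ -(k * g t))
    (hG : Tendsto (fun t => ∫ s in a..t, g s) atTop atTop) :
    ∀ᶠ t in atTop, f t ≤ -(k / 2 * ∫ s in a..t, g s) := by
  obtain ⟨T, hT, haT⟩ :=
    ((eventually_forall_ge_atTop.2 (hf.and hfg)).and (eventually_ge_atTop a)).exists
  filter_upwards [eventually_ge_atTop T,
    hG.eventually_ge_atTop ((f T + k * ∫ s in a..T, g s) / (k / 2))] with t hTt hlarge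
  rw [div_le_iff₀' (half_pos hk)] at hlarge
  have hincr : f t - f T ≤ ∫ s in T..t, -(k * g s) :=
    intervalIntegral.sub_le_integral_of_hasDeriv_right_of_le hTt
      (fun s hs => (hT s hs.1).1.continuousAt.continuousWithinAt)
      (fun s hs => (hT s hs.1.le).1.hasDerivAt.hasDerivWithinAt)
      ((hg.integrableOn_compact_subset (fun s hs => haT.trans hs.1) isCompact_Icc).const_mul k).neg
      (fun s hs => (hT s hs.1.le).2)
  have hsplit := intervalIntegral.integral_add_adjacent_intervals
    (intervalIntegrable_of_locallyIntegrableOn_Ici hg le_rfl haT)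
    (intervalIntegrable_of_locallyIntegrableOn_Ici hg haT (haT.trans hTt))
  rw [intervalIntegral.integral_neg, intervalIntegral.integral_const_mul] at hincr
  rw [← hsplit] at hlarge ⊢
  linarith

end Primitive

/-! ### Noncanonical operators and their inverses -/

/-- The operator `f ↦ r (f')^p` is noncanonical on `[a, ∞)`: the exponent `p` and the coefficient
`r` are positive and `∫_a^∞ r^{-1/p} < ∞`. -/
structure Noncanonical (a p : ℝ) (r : ℝ → ℝ) : Prop where
  exponent_pos : 0 < p
  coeff_pos : ∀ t, a ≤ t → 0 < r t
  integrableOn : IntegrableOn (fun s => r s ^ (-(1 / p))) (Ici a)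

/-- The primitive `∫_a^t r^{-1/p} G^{1/p}`, which inverts the operator `f ↦ r (f')^p` on functions
`G ≥ 0` with initial value `f a = 0`. Iterating it gives the nested integrals of the oscillation
criteria. -/
noncomputable def quasiPrimitive (a p : ℝ) (r G : ℝ → ℝ) : ℝ → ℝ :=
  fun t => ∫ u in a..t, r u ^ (-(1 / p)) * G u ^ (1 / p)

namespace Noncanonical

variable {a p : ℝ} {r G : ℝ → ℝ}

lemma eventually_coeff_pos (h : Noncanonical a p r) : ∀ᶠ t in atTop, 0 < r t :=
  (eventually_ge_atTop a).mono h.coeff_pos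

lemma integrand_nonneg (h : Noncanonical a p r) (hG₀ : ∀ t, a ≤ t → 0 ≤ G t) (t : ℝ) (ht : a ≤ t) :
    0 ≤ r t ^ (-(1 / p)) * G t ^ (1 / p) :=
  mul_nonneg (Real.rpow_nonneg (h.coeff_pos t ht).le _) (Real.rpow_nonneg (hG₀ t ht) _)

lemma locallyIntegrableOn_integrand (h : Noncanonical a p r) (hG : ContinuousOn G (Ici a)) :
    LocallyIntegrableOn (fun t => r t ^ (-(1 / p)) * G t ^ (1 / p)) (Ici a) :=
  h.integrableOn.locallyIntegrableOn.mul_continuousOn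
    (hG.rpow_const fun _ _ => .inr (one_div_pos.2 h.exponent_pos).le) isClosed_Ici.isLocallyClosed

lemma continuousOn_quasiPrimitive (h : Noncanonical a p r) (hG : ContinuousOn G (Ici a)) :
    ContinuousOn (quasiPrimitive a p r G) (Ici a) :=
  continuousOn_primitive_Ici (h.locallyIntegrableOn_integrand hG)

lemma quasiPrimitive_nonneg (h : Noncanonical a p r) (hG₀ : ∀ t, a ≤ t → 0 ≤ G t) (t : ℝ)
    (ht : a ≤ t) : 0 ≤ quasiPrimitive a p r G t :=
  primitive_nonneg (h.integrand_nonneg hG₀) ht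

lemma monotoneOn_quasiPrimitive (h : Noncanonical a p r) (hG : ContinuousOn G (Ici a))
    (hG₀ : ∀ t, a ≤ t → 0 ≤ G t) : MonotoneOn (quasiPrimitive a p r G) (Ici a) :=
  monotoneOn_primitive_Ici (h.locallyIntegrableOn_integrand hG) (h.integrand_nonneg hG₀)

lemma quasiPrimitive_le (h : Noncanonical a p r) (hG : ContinuousOn G (Ici a))
    (hG₀ : ∀ t, a ≤ t → 0 ≤ G t) {M : ℝ} (hM : ∀ t, a ≤ t → G t ≤ M) {t : ℝ} (ht : a ≤ t) :
    quasiPrimitive a p r G t ≤ (∫ s in Ici a, r s ^ (-(1 / p))) * M ^ (1 / p) := by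
  have hw₀ : ∀ s, a ≤ s → 0 ≤ r s ^ (-(1 / p)) := fun s hs =>
    Real.rpow_nonneg (h.coeff_pos s hs).le _
  have hM₀ : 0 ≤ M := (hG₀ a le_rfl).trans (hM a le_rfl)
  calc quasiPrimitive a p r G t
      ≤ ∫ s in a..t, r s ^ (-(1 / p)) * M ^ (1 / p) := by
        refine intervalIntegral.integral_mono_on ht
          (intervalIntegrable_of_locallyIntegrableOn_Ici (h.locallyIntegrableOn_integrand hG)
            le_rfl ht)
          ((intervalIntegrable_of_locallyIntegrableOn_Ici h.integrableOn.locallyIntegrableOn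
            le_rfl ht).mul_const _) fun s hs => ?_
        exact mul_le_mul_of_nonneg_left (Real.rpow_le_rpow (hG₀ s hs.1) (hM s hs.1)
          (one_div_pos.2 h.exponent_pos).le) (hw₀ s hs.1)
    _ = (∫ s in Ioc a t, r s ^ (-(1 / p))) * M ^ (1 / p) := by
        rw [intervalIntegral.integral_mul_const, intervalIntegral.integral_of_le ht]
    _ ≤ (∫ s in Ici a, r s ^ (-(1 / p))) * M ^ (1 / p) := by
        refine mul_le_mul_of_nonneg_right (setIntegral_mono_set h.integrableOn ?_ ?_)
          (Real.rpow_nonneg hM₀ _)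
        · exact (ae_restrict_mem measurableSet_Ici).mono hw₀
        · exact (Ioc_subset_Ioi_self.trans Ioi_subset_Ici_self).eventuallyLE

lemma tendsto_atTop_of_quasiPrimitive (h : Noncanonical a p r) (hG : ContinuousOn G (Ici a))
    (hG₀ : ∀ t, a ≤ t → 0 ≤ G t) (hmono : MonotoneOn G (Ici a))
    (htop : Tendsto (quasiPrimitive a p r G) atTop atTop) : Tendsto G atTop atTop := by
  refine tendsto_atTop.2 fun M => ?_
  by_contra hM
  have hbound : ∀ t, a ≤ t → G t ≤ M := fun t ht => le_of_not_gt fun hlt =>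
    hM <| (eventually_ge_atTop t).mono fun s hs => hlt.le.trans (hmono ht (ht.trans hs) hs)
  obtain ⟨t, hlarge, ht⟩ := ((htop.eventually_gt_atTop
    ((∫ s in Ici a, r s ^ (-(1 / p))) * M ^ (1 / p))).and (eventually_ge_atTop a)).exists
  exact hlarge.not_ge (h.quasiPrimitive_le hG hG₀ hbound ht)

lemma exists_eventually_le_neg_mul_quasiPrimitive (h : Noncanonical a p r)
    (hG : ContinuousOn G (Ici a)) (hG₀ : ∀ t, a ≤ t → 0 ≤ G t)
    (htop : Tendsto (quasiPrimitive a p r G) atTop atTop) {f : ℝ → ℝ}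
    (hf : ∀ᶠ t in atTop, DifferentiableAt ℝ f t) {k : ℝ} (hk : 0 < k)
    (hfG : ∀ᶠ t in atTop, L1 r p f t ≤ -(k * G t)) :
    ∃ k' > 0, ∀ᶠ t in atTop, f t ≤ -(k' * quasiPrimitive a p r G t) := by
  have hk' : 0 < k ^ (1 / p) := Real.rpow_pos_of_pos hk _
  refine ⟨k ^ (1 / p) / 2, half_pos hk', eventually_le_neg_mul_primitive hk' hf
    (h.locallyIntegrableOn_integrand hG) ?_ htop⟩
  filter_upwards [hfG, eventually_ge_atTop a] with t ht hat
  have hderiv := le_of_mul_opow_le_neg h.exponent_pos (h.coeff_pos t hat)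
    (mul_nonneg hk.le (hG₀ t hat)) ht
  rwa [Real.mul_rpow hk.le (hG₀ t hat), mul_left_comm] at hderiv

end Noncanonical

/-! ### Solutions -/

lemma L1_neg (r : ℝ → ℝ) (p : ℝ) (f : ℝ → ℝ) : L1 r p (-f) = -L1 r p f := by
  funext t
  simp [L1, deriv.neg', opow_neg]

lemma L2_neg (r₁ r₂ : ℝ → ℝ) (α β : ℝ) (y : ℝ → ℝ) : L2 r₁ r₂ α β (-y) = -L2 r₁ r₂ α β y := by
  change L1 r₂ β (L1 r₁ α (-y)) = -L1 r₂ β (L1 r₁ α y)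
  rw [L1_neg, L1_neg]

lemma L3_neg (r₁ r₂ : ℝ → ℝ) (α β : ℝ) (y : ℝ → ℝ) : L3 r₁ r₂ α β (-y) = -L3 r₁ r₂ α β y := by
  funext t
  simp [L3, L2_neg, deriv.neg']

lemma eventually_differentiableAt_of_differentiableOn_Ici {f : ℝ → ℝ} {T : ℝ}
    (hf : DifferentiableOn ℝ f (Ici T)) : ∀ᶠ t in atTop, DifferentiableAt ℝ f t :=
  (eventually_gt_atTop T).mono fun _ ht => hf.differentiableAt (Ici_mem_nhds ht)

namespace IsSolution

variable {t₀ α β γ : ℝ} {r₁ r₂ q σ y : ℝ → ℝ}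

lemma neg (hy : IsSolution t₀ α β γ r₁ r₂ q σ y) : IsSolution t₀ α β γ r₁ r₂ q σ (-y) := by
  obtain ⟨T, hT, hyc, hyd, hL1c, hL1d, hL2c, hL2d, heq, hne⟩ := hy
  refine ⟨T, hT, hyc.neg, hyd.neg, ?_, ?_, ?_, ?_, fun t ht => ?_, fun T' hT' => ?_⟩
  · simpa only [L1_neg] using hL1c.neg
  · simpa only [L1_neg] using hL1d.neg
  · simpa only [L2_neg] using hL2c.neg
  · simpa only [L2_neg] using hL2d.neg
  · simp only [L3_neg, Pi.neg_apply, opow_neg]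
    linarith [heq t ht]
  · simpa using hne T' hT'

lemma eventually_differentiableAt (hy : IsSolution t₀ α β γ r₁ r₂ q σ y) :
    ∀ᶠ t in atTop, DifferentiableAt ℝ y t :=
  let ⟨_, _, _, hyd, _⟩ := hy
  eventually_differentiableAt_of_differentiableOn_Ici hyd

lemma eventually_differentiableAt_L1 (hy : IsSolution t₀ α β γ r₁ r₂ q σ y) :
    ∀ᶠ t in atTop, DifferentiableAt ℝ (L1 r₁ α y) t :=
  let ⟨_, _, _, _, _, hL1d, _⟩ := hy
  eventually_differentiableAt_of_differentiableOn_Ici hL1d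

lemma eventually_differentiableAt_L2 (hy : IsSolution t₀ α β γ r₁ r₂ q σ y) :
    ∀ᶠ t in atTop, DifferentiableAt ℝ (L2 r₁ r₂ α β y) t :=
  let ⟨_, _, _, _, _, _, _, hL2d, _⟩ := hy
  eventually_differentiableAt_of_differentiableOn_Ici hL2d

lemma eventually_deriv_L2_eq (hy : IsSolution t₀ α β γ r₁ r₂ q σ y) :
    ∀ᶠ t in atTop, deriv (L2 r₁ r₂ α β y) t = -(q t * opow (y (σ t)) γ) :=
  let ⟨T, _, _, _, _, _, _, _, heq, _⟩ := hy
  (eventually_ge_atTop T).mono fun t ht => eq_neg_of_add_eq_zero_left (heq t ht)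

lemma exists_monotoneOn_or_antitoneOn (hy : IsSolution t₀ α β γ r₁ r₂ q σ y)
    (hr₁ : ∀ᶠ t in atTop, 0 < r₁ t) (hr₂ : ∀ᶠ t in atTop, 0 < r₂ t)
    (hq₀ : ∀ᶠ t in atTop, 0 ≤ q t) (hσ : Tendsto σ atTop atTop)
    (hpos : ∀ᶠ t in atTop, 0 < y t) :
    ∃ T, MonotoneOn y (Ici T) ∨ AntitoneOn y (Ici T) := by
  have hL3 : EventuallyConstSign (deriv (L2 r₁ r₂ α β y)) := by
    refine .inr ?_
    filter_upwards [hy.eventually_deriv_L2_eq, hq₀, hσ.eventually hpos] with t ht hqt hyσ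
    rw [ht]
    exact neg_nonpos.2 (mul_nonneg hqt (opow_pos hyσ γ).le)
  have hL2 : EventuallyConstSign (L1 r₂ β (L1 r₁ α y)) :=
    hL3.of_deriv hy.eventually_differentiableAt_L2
  have hL1 : EventuallyConstSign (L1 r₁ α y) :=
    (hL2.deriv_of_L1 hr₂).of_deriv hy.eventually_differentiableAt_L1
  exact exists_monotoneOn_or_antitoneOn_of_deriv hy.eventually_differentiableAt
    (hL1.deriv_of_L1 hr₁)

lemma eventually_L2_le (hy : IsSolution t₀ α β γ r₁ r₂ q σ y) (hγ : 0 ≤ γ)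
    (hq : LocallyIntegrableOn q (Ici t₀)) (hq₀ : ∀ᶠ t in atTop, 0 ≤ q t)
    (hσ : Tendsto σ atTop atTop) (hQ : Tendsto (fun t => ∫ s in t₀..t, q s) atTop atTop)
    {c : ℝ} (hc : 0 < c) (hlow : ∀ᶠ t in atTop, c ≤ y t) :
    ∀ᶠ t in atTop, L2 r₁ r₂ α β y t ≤ -(c ^ γ / 2 * ∫ s in t₀..t, q s) := by
  refine eventually_le_neg_mul_primitive (Real.rpow_pos_of_pos hc γ)
    hy.eventually_differentiableAt_L2 hq ?_ hQ
  filter_upwards [hy.eventually_deriv_L2_eq, hq₀, hσ.eventually hlow] with t ht hqt hyσ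
  rw [ht, opow_of_pos (hc.trans_le hyσ), mul_comm]
  exact neg_le_neg (mul_le_mul_of_nonneg_right (Real.rpow_le_rpow hc.le hyσ hγ) hqt)

lemma not_eventually_ge (hy : IsSolution t₀ α β γ r₁ r₂ q σ y)
    (h₁ : Noncanonical t₀ α r₁) (h₂ : Noncanonical t₀ β r₂) (hγ : 0 ≤ γ)
    (hq : LocallyIntegrableOn q (Ici t₀)) (hq₀ : ∀ t, t₀ ≤ t → 0 ≤ q t)
    (hσ : Tendsto σ atTop atTop)
    (hdiv : Tendsto (quasiPrimitive t₀ α r₁ (quasiPrimitive t₀ β r₂ fun u => ∫ s in t₀..u, q s))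
      atTop atTop) {c : ℝ} (hc : 0 < c) : ¬∀ᶠ t in atTop, c ≤ y t := by
  intro hlow
  set Q : ℝ → ℝ := fun u => ∫ s in t₀..u, q s
  have hQc : ContinuousOn Q (Ici t₀) := continuousOn_primitive_Ici hq
  have hQ₀ : ∀ t, t₀ ≤ t → 0 ≤ Q t := fun t ht => primitive_nonneg hq₀ ht
  have hJc := h₂.continuousOn_quasiPrimitive hQc
  have hJ₀ := h₂.quasiPrimitive_nonneg hQ₀
  have hJtop : Tendsto (quasiPrimitive t₀ β r₂ Q) atTop atTop :=
    h₁.tendsto_atTop_of_quasiPrimitive hJc hJ₀ (h₂.monotoneOn_quasiPrimitive hQc hQ₀) hdiv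
  have hQtop : Tendsto Q atTop atTop :=
    h₂.tendsto_atTop_of_quasiPrimitive hQc hQ₀ (monotoneOn_primitive_Ici hq hq₀) hJtop
  have hL2 := hy.eventually_L2_le hγ hq ((eventually_ge_atTop t₀).mono hq₀) hσ hQtop hc hlow
  obtain ⟨k₁, hk₁, hL1⟩ := h₂.exists_eventually_le_neg_mul_quasiPrimitive hQc hQ₀ hJtop
    hy.eventually_differentiableAt_L1 (half_pos (Real.rpow_pos_of_pos hc γ)) hL2
  obtain ⟨k₀, hk₀, hy_le⟩ := h₁.exists_eventually_le_neg_mul_quasiPrimitive hJc hJ₀ hdiv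
    hy.eventually_differentiableAt hk₁ hL1
  obtain ⟨t, hct, hyt, ht⟩ := (hlow.and (hy_le.and (eventually_ge_atTop t₀))).exists
  linarith [mul_nonneg hk₀.le (h₁.quasiPrimitive_nonneg hJ₀ t ht)]

lemma tendsto_zero_of_eventually_pos (hy : IsSolution t₀ α β γ r₁ r₂ q σ y)
    (h₁ : Noncanonical t₀ α r₁) (h₂ : Noncanonical t₀ β r₂) (hγ : 0 ≤ γ)
    (hq : LocallyIntegrableOn q (Ici t₀)) (hq₀ : ∀ t, t₀ ≤ t → 0 ≤ q t)
    (hσ : Tendsto σ atTop atTop)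
    (hdiv : Tendsto (quasiPrimitive t₀ α r₁ (quasiPrimitive t₀ β r₂ fun u => ∫ s in t₀..u, q s))
      atTop atTop) (hpos : ∀ᶠ t in atTop, 0 < y t) : Tendsto y atTop (nhds 0) := by
  obtain ⟨T, hT⟩ := hy.exists_monotoneOn_or_antitoneOn h₁.eventually_coeff_pos
    h₂.eventually_coeff_pos ((eventually_ge_atTop t₀).mono hq₀) hσ hpos
  exact tendsto_zero_of_monotoneOn_or_antitoneOn hT hpos fun c hc =>
    hy.not_eventually_ge h₁ h₂ hγ hq hq₀ hσ hdiv hc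

end IsSolution

theorem propertyA_of_limsup'_general {t₀ α β γ : ℝ} {r₁ r₂ q σ : ℝ → ℝ}
    (h₁ : Noncanonical t₀ α r₁) (h₂ : Noncanonical t₀ β r₂) (hγ : 0 ≤ γ)
    (hq : LocallyIntegrableOn q (Ici t₀)) (hq₀ : ∀ t, t₀ ≤ t → 0 ≤ q t)
    (hσ : Tendsto σ atTop atTop)
    (hdiv : Tendsto (quasiPrimitive t₀ α r₁ (quasiPrimitive t₀ β r₂ fun u => ∫ s in t₀..u, q s))
      atTop atTop) : PropertyA t₀ α β γ r₁ r₂ q σ := by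
  intro y hy
  refine or_iff_not_imp_left.2 fun hosc => ?_
  have ⟨_, _, hcont, _⟩ := hy
  rcases eventually_pos_or_neg_of_not_oscillatory hcont hosc with hpos | hneg
  · exact hy.tendsto_zero_of_eventually_pos h₁ h₂ hγ hq hq₀ hσ hdiv hpos
  · have hlim := hy.neg.tendsto_zero_of_eventually_pos h₁ h₂ hγ hq hq₀ hσ hdiv
      (hneg.mono fun t ht => neg_pos.2 ht)
    simpa using hlim.neg

theorem propertyA_of_limsup' (t₀ α β γ : ℝ) (r₁ r₂ q σ : ℝ → ℝ)
    (H : Hyp t₀ α β γ r₁ r₂ q σ)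
    (hγαβ : γ = α * β)
    (hdiv : Filter.Tendsto (fun t => ∫ v in t₀..t, r₁ v ^ (-(1/α)) *
      (∫ u in t₀..v, r₂ u ^ (-(1/β)) * (∫ s in t₀..u, q s) ^ (1/β)) ^ (1/α))
      Filter.atTop Filter.atTop)
    (hls : 1 < Filter.limsup (fun t => (pi1 r₁ α (σ t)) ^ (γ/β) *
      ∫ u in t₀..t, r₂ u ^ (-(1/β)) * (∫ s in t₀..u, q s) ^ (1/β)) Filter.atTop) :
    PropertyA t₀ α β γ r₁ r₂ q σ := by
  have hσ : Tendsto σ atTop atTop :=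
    tendsto_atTop_mono' atTop ((eventually_ge_atTop t₀).mono H.hσadv) tendsto_id
  exact propertyA_of_limsup'_general ⟨H.hα.pos, H.hr₁p, H.hπ₁fin⟩ ⟨H.hβ.pos, H.hr₂p, H.hπ₂fin⟩
    H.hγ.pos.le (H.hqc.locallyIntegrableOn measurableSet_Ici) H.hq0 hσ hdiv
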